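/- Let Ω ⊆ ℝ^N be a bounded open set, 1 < p < ∞ and q = p/(p−1). Let B : L^q(Ω) → L^p(Ω) be a positive continuous linear operator and g ∈ L^p(Ω). Suppose (z_k) ⊆ L^p(Ω) converges weakly in L^p(Ω) to z₀, (ν_k) ⊆ L^q(Ω) converges weakly in L^q(Ω) to ν₀, that z_k + B ν_k = g for every k and z₀ + B ν₀ = g, and that liminf_{k→∞} ∫_Ω ν_k z_k dx ≥ ∫_Ω ν₀ z₀ dx. Then lim_{k→∞} ∫_Ω ν_k z_k dx = ∫_Ω ν₀ z₀ dx and lim_{k→∞} ∫_Ω ν_k (B ν_k) dx = ∫_Ω ν₀ (B ν₀) dx. -/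

import Mathlib

open MeasureTheory Filter Topology

/-!
Monotonicity of `B` says `⟨ν_k - ν₀, z_k - z₀⟩ ≤ 0`, that is
`⟨ν_k, z_k⟩ ≤ ⟨ν_k, z₀⟩ + ⟨ν₀, z_k⟩ - ⟨ν₀, z₀⟩`, and the right-hand side tends to `⟨ν₀, z₀⟩` by weak
convergence. So the limsup of `⟨ν_k, z_k⟩` is at most `⟨ν₀, z₀⟩`, and the liminf hypothesis gives
the limit. Since the liminf of a real sequence is a junk value unless the sequence is bounded below,
one also needs `⟨ν_k, z_k⟩` to be bounded. By the uniform boundedness principle the functionals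
`⟨ν_k, ·⟩` and `⟨·, z_k⟩` are bounded, and the norm of a function in `L^r` with `r < ∞` is the norm
of the functional it defines.
-/

open scoped ENNReal NNReal

theorem tendsto_of_le_liminf_of_eventuallyLE {ι α : Type*} [ConditionallyCompleteLinearOrder α]
    [TopologicalSpace α] [OrderTopology α] {l : Filter ι} {u c : ι → α} {a : α}
    (hinf : a ≤ liminf u l) (hle : u ≤ᶠ[l] c) (hc : Tendsto c l (𝓝 a))
    (hu : l.IsBoundedUnder (· ≥ ·) u) : Tendsto u l (𝓝 a) := by
  rcases l.eq_or_neBot with rfl | _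
  · exact tendsto_bot
  refine tendsto_of_le_liminf_of_limsup_le hinf ?_ (hc.isBoundedUnder_le.mono_le hle) hu
  calc limsup u l ≤ limsup c l :=
        limsup_le_limsup hle hu.isCoboundedUnder_le hc.isBoundedUnder_le
    _ = a := hc.limsup_eq

section Bilinear

theorem tendsto_bilin_of_bilin_sub_sub_nonpos {ι E F : Type*} [AddCommGroup E] [Module ℝ E]
    [AddCommGroup F] [Module ℝ F] (P : E →ₗ[ℝ] F →ₗ[ℝ] ℝ) {l : Filter ι}
    {x : ι → E} {x₀ : E} {y : ι → F} {y₀ : F}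
    (hx : Tendsto (fun k => P (x k) y₀) l (𝓝 (P x₀ y₀)))
    (hy : Tendsto (fun k => P x₀ (y k)) l (𝓝 (P x₀ y₀)))
    (hxy : ∀ k, P (x k - x₀) (y k - y₀) ≤ 0)
    (hbdd : l.IsBoundedUnder (· ≥ ·) fun k => P (x k) (y k))
    (hinf : P x₀ y₀ ≤ liminf (fun k => P (x k) (y k)) l) :
    Tendsto (fun k => P (x k) (y k)) l (𝓝 (P x₀ y₀)) := by
  have hlim : Tendsto (fun k => P (x k) y₀ + P x₀ (y k) - P x₀ y₀) l (𝓝 (P x₀ y₀)) := by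
    simpa only [add_sub_cancel_right] using (hx.add hy).sub_const (P x₀ y₀)
  refine tendsto_of_le_liminf_of_eventuallyLE hinf (Eventually.of_forall fun k => ?_) hlim hbdd
  have h := hxy k
  simp only [map_sub, LinearMap.sub_apply] at h
  linarith

variable {𝕜 E F G : Type*} [NontriviallyNormedField 𝕜]
  [SeminormedAddCommGroup E] [NormedSpace 𝕜 E] [SeminormedAddCommGroup F] [NormedSpace 𝕜 F]
  [SeminormedAddCommGroup G] [NormedSpace 𝕜 G]

theorem exists_norm_le_of_tendsto_apply [CompleteSpace E] {T : ℕ → E →L[𝕜] F} {c : E → F}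
    (hT : ∀ v, Tendsto (fun k => T k v) atTop (𝓝 (c v))) : ∃ C, ∀ k, ‖T k‖ ≤ C :=
  banach_steinhaus fun v =>
    let ⟨C, hC⟩ := (hT v).norm.bddAbove_range
    ⟨C, fun k => hC ⟨k, rfl⟩⟩

theorem exists_norm_bilin_le_of_tendsto [CompleteSpace E] [CompleteSpace F]
    {P : E →L[𝕜] F →L[𝕜] G} {K : ℝ≥0} (hP : AntilipschitzWith K P.flip)
    {x : ℕ → E} {y : ℕ → F} {a : F → G} {b : E → G}
    (hx : ∀ w, Tendsto (fun k => P (x k) w) atTop (𝓝 (a w)))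
    (hy : ∀ v, Tendsto (fun k => P v (y k)) atTop (𝓝 (b v))) :
    ∃ C, ∀ k, ‖P (x k) (y k)‖ ≤ C := by
  obtain ⟨C, hC⟩ := exists_norm_le_of_tendsto_apply hx
  obtain ⟨D, hD⟩ := exists_norm_le_of_tendsto_apply (T := fun k => P.flip (y k)) hy
  have hy_le (k : ℕ) : ‖y k‖ ≤ K * D :=
    (ZeroHomClass.bound_of_antilipschitz P.flip hP (y k)).trans (by gcongr; exact hD k)
  exact ⟨C * (K * D), fun k => (P (x k)).le_of_opNorm_le_of_le (hC k) (hy_le k)⟩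

end Bilinear

section LpDuality

/-- The scalar duality map `t ↦ t |t| ^ (r - 2)`. Composed with `f ∈ L^r` it gives, up to
normalization, the function of the conjugate space at which the functional `g ↦ ∫ f g` attains its
norm. -/
noncomputable def dualityMap (r t : ℝ) : ℝ := t * |t| ^ (r - 2)

theorem mul_dualityMap {r : ℝ} (hr : r ≠ 0) (t : ℝ) : t * dualityMap r t = |t| ^ r := by
  rcases eq_or_ne t 0 with rfl | ht
  · simp [Real.zero_rpow hr]
  · calc t * dualityMap r t = |t| ^ (2 : ℝ) * |t| ^ (r - 2) := by
          rw [dualityMap, ← mul_assoc, Real.rpow_two, sq_abs, sq]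
      _ = |t| ^ r := by rw [← Real.rpow_add (abs_pos.2 ht), add_sub_cancel]

theorem abs_dualityMap_le (r t : ℝ) : |dualityMap r t| ≤ |t| ^ (r - 1) := by
  rcases eq_or_ne t 0 with rfl | ht
  · simpa [dualityMap] using Real.rpow_nonneg le_rfl (r - 1)
  · refine le_of_eq ?_
    calc |dualityMap r t| = |t| ^ (1 : ℝ) * |t| ^ (r - 2) := by
          rw [dualityMap, abs_mul, abs_of_nonneg (Real.rpow_nonneg (abs_nonneg t) _), Real.rpow_one]
      _ = |t| ^ (r - 1) := by rw [← Real.rpow_add (abs_pos.2 ht)]; ring_nf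

theorem measurable_dualityMap (r : ℝ) : Measurable (dualityMap r) := by
  unfold dualityMap
  fun_prop

variable {α : Type*} [MeasurableSpace α] {μ : Measure α} {p q : ℝ≥0∞}

theorem eLpNorm_norm_rpow_toReal_sub_one_le [p.HolderConjugate q] {E : Type*}
    [NormedAddCommGroup E] (hp : p ≠ ∞) (f : α → E) :
    eLpNorm (fun x => ‖f x‖ ^ (p.toReal - 1)) q μ ≤ eLpNorm f p μ ^ (p.toReal - 1) := by
  rcases eq_or_ne p 1 with rfl | hp1
  · obtain rfl := ENNReal.HolderConjugate.unique 1 q ∞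
    simpa using eLpNormEssSup_le_of_ae_bound (C := 1) (f := fun _ : α => (1 : ℝ)) (μ := μ) (by simp)
  · have hone : 1 < p := lt_of_le_of_ne (ENNReal.HolderConjugate.one_le p q) hp1.symm
    have hexp : q * ENNReal.ofReal (p.toReal - 1) = p := by
      rw [ENNReal.ofReal_sub _ zero_le_one, ENNReal.ofReal_toReal hp, ENNReal.ofReal_one,
        ← ENNReal.HolderConjugate.div_conj_eq_sub_one (q := q)]
      exact ENNReal.mul_div_cancel (ENNReal.HolderConjugate.ne_zero q p)
        ((ENNReal.HolderConjugate.lt_top_iff_one_lt q p).2 hone).ne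
    have hpos : 0 < p.toReal - 1 :=
      sub_pos.2 (by simpa using (ENNReal.toReal_lt_toReal ENNReal.one_ne_top hp).2 hone)
    rw [eLpNorm_norm_rpow f hpos, hexp]

theorem eLpNorm_dualityMap_comp_le [p.HolderConjugate q] (hp : p ≠ ∞) (f : α → ℝ) :
    eLpNorm (fun x => dualityMap p.toReal (f x)) q μ ≤ eLpNorm f p μ ^ (p.toReal - 1) :=
  (eLpNorm_mono_real fun _ => abs_dualityMap_le _ _).trans
    (eLpNorm_norm_rpow_toReal_sub_one_le hp f)

theorem norm_rpow_toReal_eq_integral_norm_rpow {E : Type*} [NormedAddCommGroup E]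
    (hp0 : p ≠ 0) (hp : p ≠ ∞) (f : Lp E p μ) : ‖f‖ ^ p.toReal = ∫ x, ‖f x‖ ^ p.toReal ∂μ := by
  have hf := Lp.aestronglyMeasurable f
  rw [Lp.norm_def, toReal_eLpNorm hf, lpNorm_eq_integral_norm_rpow_toReal hp0 hp hf,
    Real.rpow_inv_rpow (by positivity) (ENNReal.toReal_pos hp0 hp).ne']

theorem exists_norm_le_integral_mul_eq_norm_rpow [p.HolderConjugate q] (hp : p ≠ ∞)
    (f : Lp ℝ p μ) :
    ∃ g : Lp ℝ q μ, ‖g‖ ≤ ‖f‖ ^ (p.toReal - 1) ∧ ∫ x, f x * g x ∂μ = ‖f‖ ^ p.toReal := by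
  have hp0 : p ≠ 0 := ENNReal.HolderConjugate.ne_zero p q
  have hpr : 0 ≤ p.toReal - 1 := sub_nonneg.2 <| by
    simpa using ENNReal.toReal_mono hp (ENNReal.HolderConjugate.one_le p q)
  have htop : eLpNorm f p μ ^ (p.toReal - 1) ≠ ∞ :=
    ENNReal.rpow_ne_top_of_nonneg hpr (Lp.eLpNorm_ne_top f)
  have hle := eLpNorm_dualityMap_comp_le (μ := μ) (q := q) hp f
  have hmem : MemLp (fun x => dualityMap p.toReal (f x)) q μ :=
    ⟨((measurable_dualityMap _).comp_aemeasurable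
      (Lp.aestronglyMeasurable f).aemeasurable).aestronglyMeasurable, hle.trans_lt htop.lt_top⟩
  refine ⟨hmem.toLp, ?_, ?_⟩
  · rw [Lp.norm_toLp, Lp.norm_def, ENNReal.toReal_rpow]
    exact ENNReal.toReal_mono htop hle
  · rw [norm_rpow_toReal_eq_integral_norm_rpow hp0 hp]
    refine integral_congr_ae (hmem.coeFn_toLp.mono fun x hx => ?_)
    simp only [hx, mul_dualityMap (ENNReal.toReal_pos hp0 hp).ne', Real.norm_eq_abs]

variable [Fact (1 ≤ p)] [Fact (1 ≤ q)]

variable (μ p q) in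
/-- The duality pairing `⟨f, g⟩ = ∫ f g` of `L^p` with `L^q`, for conjugate exponents. -/
noncomputable def lpMulPairing [p.HolderConjugate q] : Lp ℝ p μ →L[ℝ] Lp ℝ q μ →L[ℝ] ℝ :=
  (ContinuousLinearMap.mul ℝ ℝ).lpPairing μ p q

theorem lpMulPairing_apply [p.HolderConjugate q] (f : Lp ℝ p μ) (g : Lp ℝ q μ) :
    lpMulPairing μ p q f g = ∫ x, f x * g x ∂μ :=
  ContinuousLinearMap.lpPairing_eq_integral _ f g

theorem norm_le_norm_lpMulPairing [p.HolderConjugate q] (hp : p ≠ ∞) (f : Lp ℝ p μ) :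
    ‖f‖ ≤ ‖lpMulPairing μ p q f‖ := by
  rcases (norm_nonneg f).eq_or_lt with hf | hf
  · exact hf ▸ norm_nonneg _
  obtain ⟨g, hg, hfg⟩ := exists_norm_le_integral_mul_eq_norm_rpow (q := q) hp f
  refine le_of_mul_le_mul_right ?_ (Real.rpow_pos_of_pos hf (p.toReal - 1))
  calc ‖f‖ * ‖f‖ ^ (p.toReal - 1) = lpMulPairing μ p q f g := by
        rw [lpMulPairing_apply, hfg, Real.rpow_sub_one hf.ne', mul_div_cancel₀ _ hf.ne']
    _ ≤ ‖lpMulPairing μ p q f g‖ := Real.le_norm_self _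
    _ ≤ ‖lpMulPairing μ p q f‖ * ‖f‖ ^ (p.toReal - 1) := (lpMulPairing μ p q f).le_opNorm_of_le hg

theorem antilipschitzWith_lpMulPairing [p.HolderConjugate q] (hp : p ≠ ∞) :
    AntilipschitzWith 1 (lpMulPairing μ p q) :=
  AddMonoidHomClass.antilipschitz_of_bound _ fun f => by
    simpa only [NNReal.coe_one, one_mul] using norm_le_norm_lpMulPairing hp f

theorem lpMulPairing_flip [p.HolderConjugate q] [q.HolderConjugate p] :
    (lpMulPairing μ p q).flip = lpMulPairing μ q p := by
  ext g f
  simp only [ContinuousLinearMap.flip_apply, lpMulPairing_apply, mul_comm]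

theorem exists_norm_lpMulPairing_le_of_tendsto [p.HolderConjugate q]
    {f : ℕ → Lp ℝ p μ} {g : ℕ → Lp ℝ q μ} {a : Lp ℝ q μ → ℝ} {b : Lp ℝ p μ → ℝ}
    (hf : ∀ w, Tendsto (fun k => lpMulPairing μ p q (f k) w) atTop (𝓝 (a w)))
    (hg : ∀ v, Tendsto (fun k => lpMulPairing μ p q v (g k)) atTop (𝓝 (b v))) :
    ∃ C, ∀ k, ‖lpMulPairing μ p q (f k) (g k)‖ ≤ C := by
  have : q.HolderConjugate p := .symm
  -- At least one exponent is finite; that factor is bounded in norm.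
  rcases eq_or_ne q ∞ with rfl | hq
  · obtain rfl := ENNReal.HolderConjugate.unique ∞ p 1
    exact exists_norm_bilin_le_of_tendsto (P := (lpMulPairing μ 1 ∞).flip)
      (antilipschitzWith_lpMulPairing ENNReal.one_ne_top) hg hf
  · have hP : AntilipschitzWith 1 (lpMulPairing μ p q).flip := by
      rw [lpMulPairing_flip]
      exact antilipschitzWith_lpMulPairing hq
    exact exists_norm_bilin_le_of_tendsto hP hf hg

end LpDuality

section Hammerstein

variable {α : Type*} [MeasurableSpace α] {μ : Measure α} {p q : ℝ≥0∞}

/-- Monotonicity, in the sense of Minty and Browder, of a possibly nonlinear operator from `L^q` to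
`L^p`. The definition is meant for conjugate exponents: otherwise the integrals may be undefined,
and then count as `0`. -/
def IsMonotoneOperator (B : Lp ℝ q μ → Lp ℝ p μ) : Prop :=
  ∀ v w, 0 ≤ ∫ x, (B v - B w) x * (v - w) x ∂μ

theorem isMonotoneOperator_of_positive {𝓕 : Type*} [FunLike 𝓕 (Lp ℝ q μ) (Lp ℝ p μ)]
    [AddMonoidHomClass 𝓕 (Lp ℝ q μ) (Lp ℝ p μ)] {B : 𝓕}
    (hB : ∀ w, 0 ≤ ∫ x, B w x * w x ∂μ) : IsMonotoneOperator (B : Lp ℝ q μ → Lp ℝ p μ) :=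
  fun v w => by simpa only [map_sub] using hB (v - w)

theorem hammerstein_energy_convergence_general [q.HolderConjugate p]
    {B : Lp ℝ q μ → Lp ℝ p μ} (hB : IsMonotoneOperator B) {g : Lp ℝ p μ}
    {z : ℕ → Lp ℝ p μ} {z₀ : Lp ℝ p μ} {ν : ℕ → Lp ℝ q μ} {ν₀ : Lp ℝ q μ}
    (hz : ∀ w : Lp ℝ q μ,
      Tendsto (fun k => ∫ x, z k x * w x ∂μ) atTop (𝓝 (∫ x, z₀ x * w x ∂μ)))
    (hν : ∀ v : Lp ℝ p μ,
      Tendsto (fun k => ∫ x, ν k x * v x ∂μ) atTop (𝓝 (∫ x, ν₀ x * v x ∂μ)))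
    (heq : ∀ k, z k + B (ν k) = g) (heq₀ : z₀ + B ν₀ = g)
    (hliminf : ∫ x, ν₀ x * z₀ x ∂μ ≤ liminf (fun k => ∫ x, ν k x * z k x ∂μ) atTop) :
    Tendsto (fun k => ∫ x, ν k x * z k x ∂μ) atTop (𝓝 (∫ x, ν₀ x * z₀ x ∂μ)) ∧
    Tendsto (fun k => ∫ x, ν k x * B (ν k) x ∂μ) atTop (𝓝 (∫ x, ν₀ x * B ν₀ x ∂μ)) := by
  have : Fact (1 ≤ p) := ⟨ENNReal.HolderConjugate.one_le p q⟩
  have : Fact (1 ≤ q) := ⟨ENNReal.HolderConjugate.one_le q p⟩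
  have hBν (k : ℕ) : B (ν k) = g - z k := eq_sub_of_add_eq' (heq k)
  have hBν₀ : B ν₀ = g - z₀ := eq_sub_of_add_eq' heq₀
  have hmono (k : ℕ) : lpMulPairing μ q p (ν k - ν₀) (z k - z₀) ≤ 0 := by
    have h := hB (ν k) ν₀
    simp only [mul_comm ((B _ - B _ : Lp ℝ p μ) _)] at h
    rwa [← lpMulPairing_apply, hBν, hBν₀, sub_sub_sub_cancel_left, ← neg_sub (z k), map_neg,
      neg_nonneg] at h
  simp only [mul_comm (z _ _), mul_comm (z₀ _)] at hz
  simp only [← lpMulPairing_apply] at hz hν hliminf ⊢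
  obtain ⟨C, hC⟩ := exists_norm_lpMulPairing_le_of_tendsto hν hz
  have hlim := tendsto_bilin_of_bilin_sub_sub_nonpos (lpMulPairing μ q p).toLinearMap₁₂
    (hν z₀) (hz ν₀) hmono (isBoundedUnder_of ⟨-C, fun k => (abs_le.1 (hC k)).1⟩) hliminf
  refine ⟨hlim, ?_⟩
  simp only [hBν, hBν₀, map_sub]
  exact (hν g).sub hlim

end Hammerstein

/-- If `z_k → z₀` weakly in `L^p`, `ν_k → ν₀` weakly in `L^q`,
`z_k + B ν_k = g` for every k, `z₀ + B ν₀ = g`, and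
`liminf ∫ ν_k z_k ≥ ∫ ν₀ z₀`, then `∫ ν_k z_k → ∫ ν₀ z₀` and `∫ ν_k (B ν_k) → ∫ ν₀ (B ν₀)`. -/
theorem hammerstein_energy_convergence
    {N : ℕ} (hN : 1 ≤ N)
    (Ω : Set (EuclideanSpace ℝ (Fin N))) (hΩo : IsOpen Ω)
    (hΩb : Bornology.IsBounded Ω)
    (p q : ℝ) (hp1 : 1 < p) (hq : q = p / (p - 1))
    [Fact (1 ≤ ENNReal.ofReal p)] [Fact (1 ≤ ENNReal.ofReal q)]
    (μ : Measure (EuclideanSpace ℝ (Fin N))) (hμ : μ = volume.restrict Ω)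
    (B : Lp ℝ (ENNReal.ofReal q) μ →L[ℝ] Lp ℝ (ENNReal.ofReal p) μ)
    (hBpos : ∀ w : Lp ℝ (ENNReal.ofReal q) μ, 0 ≤ ∫ x, (B w) x * w x ∂μ)
    (g : Lp ℝ (ENNReal.ofReal p) μ)
    (z : ℕ → Lp ℝ (ENNReal.ofReal p) μ) (z₀ : Lp ℝ (ENNReal.ofReal p) μ)
    (ν : ℕ → Lp ℝ (ENNReal.ofReal q) μ) (ν₀ : Lp ℝ (ENNReal.ofReal q) μ)
    -- weak convergence z_k → z₀ in L^p
    (hz : ∀ w : Lp ℝ (ENNReal.ofReal q) μ,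
      Tendsto (fun k => ∫ x, (z k) x * w x ∂μ) atTop (𝓝 (∫ x, z₀ x * w x ∂μ)))
    -- weak convergence ν_k → ν₀ in L^q
    (hν : ∀ v : Lp ℝ (ENNReal.ofReal p) μ,
      Tendsto (fun k => ∫ x, (ν k) x * v x ∂μ) atTop (𝓝 (∫ x, ν₀ x * v x ∂μ)))
    (heq : ∀ k, z k + B (ν k) = g)
    (heq₀ : z₀ + B ν₀ = g)
    (hliminf : (∫ x, ν₀ x * z₀ x ∂μ) ≤
      Filter.liminf (fun k => ∫ x, (ν k) x * (z k) x ∂μ) atTop) :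
    Tendsto (fun k => ∫ x, (ν k) x * (z k) x ∂μ) atTop (𝓝 (∫ x, ν₀ x * z₀ x ∂μ)) ∧
    Tendsto (fun k => ∫ x, (ν k) x * (B (ν k)) x ∂μ) atTop
      (𝓝 (∫ x, ν₀ x * (B ν₀) x ∂μ)) := by
  have : (ENNReal.ofReal q).HolderConjugate (ENNReal.ofReal p) :=
    (hq ▸ Real.HolderConjugate.conjExponent hp1 : p.HolderConjugate q).symm.ennrealOfReal
  exact hammerstein_energy_convergence_general (isMonotoneOperator_of_positive hBpos) hz hν heq heq₀
    hliminf
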